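/- Let K be an algebraically closed field, R = K[x_1, ..., x_d] a polynomial ring, and G a finite group acting linearly on R, hence on V = K^d, such that every element g ≠ e of G fixes only the origin. Let S = K[x_1, ..., x_d, y_1, ..., y_d], let I_G be the Derksen ideal, and let n = (x_1, ..., x_d, y_1, ..., y_d). Then for every n-th symbolic power and every prime ideal p of S with p ≠ n, one has I_G^{(n)} S_p = I_G^n S_p for all n ≥ 1. -/

import Mathlib

/-!
Write `P_g = (y_i - g(x_i))_i`, so that `I_G = ⋂ P_g`. The ideal `P_g` is the ideal of the graph of
`g`, and the coordinate change `y_i ↦ y_i - g(x_i)` turns it into the ideal `(y_i)` of `K[x][y]`.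
Since the order of a power series over a domain is additive, the powers of `P_g` are primary.

If a prime contains `P_g` and `P_h` with `g ≠ h`, then it contains all `g(x_i) - h(x_i)`. Pulling
back along `h`, the common zeros of these polynomials become the fixed points of `h⁻¹g`, that is,
only the origin. By the Nullstellensatz such a prime is the irrelevant ideal.

Hence any other prime `p` contains at most one `P_g`. If it contains none, then `I_G S_p = S_p`. If
it contains `P_g`, then `I_G S_p = P_g S_p`, so `P_g` is a minimal prime of `I_G` and
`I_Gⁿ S_p ⊆ I_G^{(n)} S_p ⊆ P_gⁿ S_p = I_Gⁿ S_p`, where the second inclusion is the primarity of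
`P_gⁿ`.
-/

open MvPolynomial

/-- The `n`-th symbolic power of an ideal `I`:
`I^{(n)} = ⋂_{p ∈ Ass(A/I)} (Iⁿ A_p ∩ A)`. -/
noncomputable def symbolicPower {A : Type*} [CommRing A] (I : Ideal A) (n : ℕ) : Ideal A :=
  ⨅ (p : Ideal A) (hp : p ∈ associatedPrimes A (A ⧸ I)),
    haveI : p.IsPrime := hp.isPrime
    Ideal.comap (algebraMap A (Localization.AtPrime p))
      (Ideal.map (algebraMap A (Localization.AtPrime p)) (I ^ n))

/-- The component `(y₁ - g(x₁), …, y_d - g(x_d))` of the Derksen ideal, in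
`S = K[x₁, …, x_d, y₁, …, y_d]`, where the `x`-variables are indexed by `Sum.inl`
and the `y`-variables by `Sum.inr`. -/
noncomputable def derksenComponent (K : Type*) [Field K] (d : ℕ) {G : Type*} [Group G]
    [MulSemiringAction G (MvPolynomial (Fin d) K)] (g : G) :
    Ideal (MvPolynomial (Fin d ⊕ Fin d) K) :=
  Ideal.span (Set.range fun i : Fin d =>
    X (Sum.inr i) - rename Sum.inl (g • (X i : MvPolynomial (Fin d) K)))

/-- The Derksen ideal `I_G = ⋂_{g ∈ G} (y₁ - g(x₁), …, y_d - g(x_d))`. -/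
noncomputable def derksenIdeal (K : Type*) [Field K] (d : ℕ) (G : Type*) [Group G]
    [MulSemiringAction G (MvPolynomial (Fin d) K)] :
    Ideal (MvPolynomial (Fin d ⊕ Fin d) K) :=
  ⨅ g : G, derksenComponent K d g

section SymbolicPower

variable {A : Type*} [CommRing A]

theorem pow_le_symbolicPower (I : Ideal A) (n : ℕ) : I ^ n ≤ symbolicPower I n :=
  le_iInf₂ fun _ _ => Ideal.le_comap_map

theorem symbolicPower_le_of_isPrimary {I J q : Ideal A} {n : ℕ}
    (hq : q ∈ associatedPrimes A (A ⧸ I)) (hJ : J.IsPrimary) (hIJ : I ^ n ≤ J) (hJq : J ≤ q) :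
    symbolicPower I n ≤ J := by
  have := hq.isPrime
  have hdisj : Disjoint (q.primeCompl : Set A) J :=
    Set.disjoint_left.2 fun a ha haJ => ha (hJq haJ)
  calc symbolicPower I n
      ≤ ((I ^ n).map (algebraMap A (Localization.AtPrime q))).under A := iInf₂_le q hq
    _ ≤ (J.map (algebraMap A (Localization.AtPrime q))).under A :=
      Ideal.comap_mono (Ideal.map_mono hIJ)
    _ = J := IsLocalization.under_map_of_isPrimary_disjoint q.primeCompl _ hJ hdisj

theorem map_iInf_of_isLocalization {ι : Type*} [Finite ι] (M : Submonoid A) (B : Type*)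
    [CommRing B] [Algebra A B] [IsLocalization M B] (P : ι → Ideal A) :
    (⨅ i, P i).map (algebraMap A B) = ⨅ i, (P i).map (algebraMap A B) := by
  cases nonempty_fintype ι
  simpa only [Finset.inf_univ_eq_iInf] using!
    map_finset_inf (IsLocalization.mapFrameHom M B) Finset.univ P

variable (p : Ideal A) [p.IsPrime]

theorem map_iInf_localizationAtPrime_of_unique {ι : Type*} [Finite ι] (P : ι → Ideal A) (i : ι)
    (hi : ∀ j, P j ≤ p → j = i) :
    (⨅ j, P j).map (algebraMap A (Localization.AtPrime p)) =
      (P i).map (algebraMap A (Localization.AtPrime p)) := by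
  rw [map_iInf_of_isLocalization p.primeCompl]
  refine le_antisymm (iInf_le _ i) (le_iInf fun j => ?_)
  by_cases hj : P j ≤ p
  · rw [hi j hj]
  · rw [IsLocalization.AtPrime.map_eq_top_of_not_le _ hj]
    exact le_top

theorem mem_minimalPrimes_of_map_localizationAtPrime_eq {I P : Ideal A} [hP : P.IsPrime]
    (hIP : I ≤ P) (hPp : P ≤ p)
    (hmap : I.map (algebraMap A (Localization.AtPrime p)) =
      P.map (algebraMap A (Localization.AtPrime p))) :
    P ∈ I.minimalPrimes := by
  refine ⟨⟨hP, hIP⟩, fun q ⟨hq, hIq⟩ hqP => ?_⟩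
  have hdisj : Disjoint (p.primeCompl : Set A) q :=
    Set.disjoint_left.2 fun a ha haq => ha (hPp (hqP haq))
  rw [← IsLocalization.under_map_of_isPrime_disjoint p.primeCompl (Localization.AtPrime p) hq hdisj,
    Ideal.under, ← Ideal.map_le_iff_le_comap, ← hmap]
  exact Ideal.map_mono hIq

theorem map_symbolicPower_of_not_le {I : Ideal A} (hI : ¬ I ≤ p) (n : ℕ) :
    (symbolicPower I n).map (algebraMap A (Localization.AtPrime p)) =
      (I ^ n).map (algebraMap A (Localization.AtPrime p)) := by
  have htop : (I ^ n).map (algebraMap A (Localization.AtPrime p)) = ⊤ := by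
    rw [Ideal.map_pow, IsLocalization.AtPrime.map_eq_top_of_not_le _ hI, Ideal.top_pow]
  rw [htop, eq_top_iff, ← htop]
  exact Ideal.map_mono (pow_le_symbolicPower I n)

variable [IsNoetherianRing A]

theorem map_symbolicPower_of_map_eq {I P : Ideal A} [P.IsPrime] {n : ℕ}
    (hIP : I ≤ P) (hPp : P ≤ p) (hprimary : (P ^ n).IsPrimary)
    (hmap : I.map (algebraMap A (Localization.AtPrime p)) =
      P.map (algebraMap A (Localization.AtPrime p))) :
    (symbolicPower I n).map (algebraMap A (Localization.AtPrime p)) =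
      (I ^ n).map (algebraMap A (Localization.AtPrime p)) := by
  have hass : P ∈ associatedPrimes A (A ⧸ I) := by
    apply Module.associatedPrimes.minimalPrimes_annihilator_subset_associatedPrimes
    rw [Ideal.annihilator_quotient]
    exact mem_minimalPrimes_of_map_localizationAtPrime_eq p hIP hPp hmap
  have hn : n ≠ 0 := by
    rintro rfl
    exact hprimary.ne_top (by rw [pow_zero, Ideal.one_eq_top])
  refine le_antisymm ?_ (Ideal.map_mono (pow_le_symbolicPower I n))
  rw [Ideal.map_pow, hmap, ← Ideal.map_pow]
  exact Ideal.map_mono (symbolicPower_le_of_isPrimary hass hprimary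
    (Ideal.pow_right_mono hIP n) (Ideal.pow_le_self hn))

theorem map_symbolicPower_iInf {ι : Type*} [Finite ι] (P : ι → Ideal A)
    (hprime : ∀ i, (P i).IsPrime) {n : ℕ} (hprimary : ∀ i, (P i ^ n).IsPrimary)
    (hsub : {i | P i ≤ p}.Subsingleton) :
    (symbolicPower (⨅ i, P i) n).map (algebraMap A (Localization.AtPrime p)) =
      ((⨅ i, P i) ^ n).map (algebraMap A (Localization.AtPrime p)) := by
  by_cases h : ∃ i, P i ≤ p
  · obtain ⟨i, hi⟩ := h
    have := hprime i
    exact map_symbolicPower_of_map_eq p (iInf_le P i) hi (hprimary i)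
      (map_iInf_localizationAtPrime_of_unique p P i fun j hj => hsub hj hi)
  · refine map_symbolicPower_of_not_le p (fun hle => h ?_) n
    cases nonempty_fintype ι
    rw [← Finset.inf_univ_eq_iInf, Ideal.IsPrime.inf_le' ‹_›] at hle
    simpa using hle

end SymbolicPower

section IdealOfVars

variable {σ A : Type*} [CommRing A]

theorem ker_constantCoeff_eq_idealOfVars :
    RingHom.ker (constantCoeff : MvPolynomial σ A →+* A) = idealOfVars σ A := by
  ext f
  rw [RingHom.mem_ker, ← pow_one (idealOfVars σ A), mem_pow_idealOfVars_iff']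
  simp [Finsupp.degree_eq_zero_iff, constantCoeff_eq]

theorem isPrime_idealOfVars [IsDomain A] : (idealOfVars σ A).IsPrime :=
  ker_constantCoeff_eq_idealOfVars (σ := σ) (A := A) ▸ RingHom.ker_isPrime _

theorem isMaximal_idealOfVars {K : Type*} [Field K] : (idealOfVars σ K).IsMaximal :=
  ker_constantCoeff_eq_idealOfVars (σ := σ) (A := K) ▸
    RingHom.ker_isMaximal_of_surjective _ fun c => ⟨C c, constantCoeff_C _ c⟩

theorem mem_pow_idealOfVars_iff_le_order {n : ℕ} {f : MvPolynomial σ A} :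
    f ∈ idealOfVars σ A ^ n ↔ n ≤ (f : MvPowerSeries σ A).order := by
  rw [mem_pow_idealOfVars_iff']
  refine ⟨fun h => MvPowerSeries.nat_le_order fun x hx => by rw [coeff_coe, h x hx],
    fun h x hx => ?_⟩
  rw [← coeff_coe]
  exact MvPowerSeries.coeff_of_lt_order (lt_of_lt_of_le (by exact_mod_cast hx) h)

theorem isPrimary_idealOfVars_pow [IsDomain A] {n : ℕ} (hn : n ≠ 0) :
    (idealOfVars σ A ^ n).IsPrimary := by
  have hprime := isPrime_idealOfVars (σ := σ) (A := A)
  refine Ideal.isPrimary_iff.2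
    ⟨ne_top_of_le_ne_top hprime.ne_top (Ideal.pow_le_self hn), fun {f s} hfs => ?_⟩
  rw [Ideal.radical_pow _ hn, hprime.radical, or_iff_not_imp_right]
  intro hs
  have horder : (s : MvPowerSeries σ A).order = 0 := by
    rwa [← pow_one (idealOfVars σ A), mem_pow_idealOfVars_iff_le_order, Nat.cast_one,
      Order.one_le_iff_ne_zero, not_not] at hs
  rwa [mem_pow_idealOfVars_iff_le_order, coe_mul, MvPowerSeries.order_mul, horder, add_zero,
    ← mem_pow_idealOfVars_iff_le_order] at hfs

theorem idealOfVars_le_of_zeroLocus_subset {K L : Type*} [Field K] [Field L] [Algebra K L]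
    [IsAlgClosed L] [Finite σ] {q : Ideal (MvPolynomial σ K)} [q.IsPrime]
    (hq : zeroLocus L q ⊆ {0}) : idealOfVars σ K ≤ q := by
  rw [← IsPrime.vanishingIdeal_zeroLocus (K := L) q, Ideal.span_le]
  rintro _ ⟨i, rfl⟩ v hv
  rw [aeval_X, hq hv, Pi.zero_apply]

end IdealOfVars

section GraphIdeal

variable {σ τ R : Type*} [CommRing R]

/-- The ideal of the graph `y = f(x)` of a polynomial map `f`, in the polynomial ring whose
`x`-variables are indexed by `Sum.inl` and whose `y`-variables are indexed by `Sum.inr`. -/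
noncomputable def graphIdeal (f : τ → MvPolynomial σ R) : Ideal (MvPolynomial (σ ⊕ τ) R) :=
  Ideal.span (Set.range fun i => X (Sum.inr i) - rename Sum.inl (f i))

/-- The translation `y ↦ y - a` of affine space, as an automorphism of its coordinate ring. -/
noncomputable def translateEquiv (a : τ → R) : MvPolynomial τ R ≃ₐ[R] MvPolynomial τ R :=
  AlgEquiv.ofAlgHom (aeval fun i => X i - C (a i)) (aeval fun i => X i + C (a i))
    (algHom_ext fun i => by simp [← algebraMap_eq]) (algHom_ext fun i => by simp [← algebraMap_eq])

/-- The coordinate change `y_i ↦ y_i - f_i(x)`, from `R[x][y]` to `R[x, y]`; it straightens the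
graph of `f` to the locus `y = 0`. -/
noncomputable def graphEquiv (f : τ → MvPolynomial σ R) :
    MvPolynomial τ (MvPolynomial σ R) ≃+* MvPolynomial (σ ⊕ τ) R :=
  (translateEquiv f).toRingEquiv.trans
    ((sumAlgEquiv R τ σ).symm.trans (renameEquiv R (Equiv.sumComm τ σ))).toRingEquiv

theorem graphEquiv_X (f : τ → MvPolynomial σ R) (i : τ) :
    graphEquiv f (X i) = X (Sum.inr i) - rename Sum.inl (f i) := by
  have hC : (sumAlgEquiv R τ σ).symm (C (f i)) = rename Sum.inr (f i) :=
    (AlgEquiv.symm_apply_eq _).2 (DFunLike.congr_fun (sumAlgEquiv_comp_rename_inr R τ σ) (f i)).symm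
  have hX : translateEquiv f (X i) = X i - C (f i) := aeval_X _ i
  simp [graphEquiv, hX, hC, rename_rename, Function.comp_def]

theorem map_graphEquiv_idealOfVars (f : τ → MvPolynomial σ R) :
    (idealOfVars τ (MvPolynomial σ R)).map (graphEquiv f) = graphIdeal f := by
  rw [idealOfVars, Ideal.map_span, ← Set.range_comp, graphIdeal]
  simp only [Function.comp_def, graphEquiv_X]

variable [IsDomain R]

theorem isPrime_graphIdeal (f : τ → MvPolynomial σ R) : (graphIdeal f).IsPrime := by
  have := isPrime_idealOfVars (σ := τ) (A := MvPolynomial σ R)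
  rw [← map_graphEquiv_idealOfVars]
  exact Ideal.map_isPrime_of_equiv _

theorem isPrimary_graphIdeal_pow (f : τ → MvPolynomial σ R) {n : ℕ} (hn : n ≠ 0) :
    (graphIdeal f ^ n).IsPrimary := by
  rw [← map_graphEquiv_idealOfVars, ← Ideal.map_pow, ← Ideal.comap_symm]
  exact (isPrimary_idealOfVars_pow hn).comap (graphEquiv f).symm.toRingHom

end GraphIdeal

section Action

variable {K L G : Type*} [Field K] [Field L] [Algebra K L] [IsAlgClosed L] [Group G]

theorem idealOfVars_le_of_smul_X_sub_smul_X_mem {σ : Type*} [Finite σ]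
    [MulSemiringAction G (MvPolynomial σ K)]
    (hzero : ∀ (g : G) (i : σ), constantCoeff (g • (X i : MvPolynomial σ K)) = 0)
    (hfix : ∀ g : G, g ≠ 1 → ∀ v : σ → L,
      (∀ i, aeval v (g • (X i : MvPolynomial σ K)) = v i) → v = 0)
    {g h : G} (hgh : g ≠ h) {q : Ideal (MvPolynomial σ K)} [q.IsPrime]
    (hq : ∀ i, g • (X i : MvPolynomial σ K) - h • X i ∈ q) : idealOfVars σ K ≤ q := by
  let q' := q.comap (MulSemiringAction.toRingHom G (MvPolynomial σ K) h)
  have hlocus : zeroLocus L q' ⊆ {0} := by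
    intro v hv
    refine hfix (h⁻¹ * g) (by rwa [ne_eq, inv_mul_eq_one, eq_comm]) v fun i => ?_
    have hmem : (h⁻¹ * g) • (X i : MvPolynomial σ K) - X i ∈ q' := by
      simpa [q', smul_sub, smul_smul] using hq i
    simpa [sub_eq_zero] using hv _ hmem
  have hq' : idealOfVars σ K ≤ q' := idealOfVars_le_of_zeroLocus_subset hlocus
  rw [Ideal.span_le]
  rintro _ ⟨i, rfl⟩
  have hmem : h⁻¹ • (X i : MvPolynomial σ K) ∈ idealOfVars σ K := by
    rw [← ker_constantCoeff_eq_idealOfVars]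
    exact hzero h⁻¹ i
  simpa [q'] using hq' hmem

variable {d : ℕ} [MulSemiringAction G (MvPolynomial (Fin d) K)]

theorem idealOfVars_le_of_derksenComponent_le
    (hzero : ∀ (g : G) (i : Fin d), constantCoeff (g • (X i : MvPolynomial (Fin d) K)) = 0)
    (hfix : ∀ g : G, g ≠ 1 → ∀ v : Fin d → L,
      (∀ i, aeval v (g • (X i : MvPolynomial (Fin d) K)) = v i) → v = 0)
    {g h : G} (hgh : g ≠ h) {p : Ideal (MvPolynomial (Fin d ⊕ Fin d) K)} [p.IsPrime]
    (hg : derksenComponent K d g ≤ p) (hh : derksenComponent K d h ≤ p) :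
    idealOfVars (Fin d ⊕ Fin d) K ≤ p := by
  have hgp (i : Fin d) : X (Sum.inr i) - rename Sum.inl (g • X i) ∈ p :=
    hg (Ideal.subset_span ⟨i, rfl⟩)
  have hhp (i : Fin d) : X (Sum.inr i) - rename Sum.inl (h • X i) ∈ p :=
    hh (Ideal.subset_span ⟨i, rfl⟩)
  have hle : idealOfVars (Fin d) K ≤ p.comap (rename Sum.inl) := by
    refine idealOfVars_le_of_smul_X_sub_smul_X_mem hzero hfix hgh fun i => ?_
    simpa using sub_mem (hhp i) (hgp i)
  rw [Ideal.span_le]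
  rintro _ ⟨i | i, rfl⟩
  · simpa using hle (Ideal.subset_span ⟨i, rfl⟩)
  · have hmem : g • (X i : MvPolynomial (Fin d) K) ∈ idealOfVars (Fin d) K := by
      rw [← ker_constantCoeff_eq_idealOfVars]
      exact hzero g i
    simpa using add_mem (hgp i) (hle hmem)

theorem symbolicPower_derksenIdeal_localized_general [Finite G]
    (hzero : ∀ (g : G) (i : Fin d), constantCoeff (g • (X i : MvPolynomial (Fin d) K)) = 0)
    (hfix : ∀ g : G, g ≠ 1 → ∀ v : Fin d → L,
      (∀ i, aeval v (g • (X i : MvPolynomial (Fin d) K)) = v i) → v = 0)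
    {n : ℕ} (hn : n ≠ 0) (p : Ideal (MvPolynomial (Fin d ⊕ Fin d) K)) [hprime : p.IsPrime]
    (hp : p ≠ idealOfVars (Fin d ⊕ Fin d) K) :
    (symbolicPower (derksenIdeal K d G) n).map (algebraMap _ (Localization.AtPrime p)) =
      (derksenIdeal K d G ^ n).map (algebraMap _ (Localization.AtPrime p)) := by
  refine map_symbolicPower_iInf p (derksenComponent K d) (fun _ => isPrime_graphIdeal _)
    (fun _ => isPrimary_graphIdeal_pow _ hn) fun g hg h hh => ?_
  by_contra hgh
  have hle := idealOfVars_le_of_derksenComponent_le hzero hfix hgh hg hh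
  exact hp (isMaximal_idealOfVars.eq_of_le hprime.ne_top hle).symm

end Action

/-- If every non-identity element of `G` fixes only the origin, then symbolic and
ordinary powers of the Derksen ideal agree after localization at any prime different
from the homogeneous maximal ideal. -/
theorem symbolicPower_derksenIdeal_localized {K : Type*} [Field K] [IsAlgClosed K]
    (d : ℕ) (G : Type*) [Group G] [Finite G]
    [MulSemiringAction G (MvPolynomial (Fin d) K)]
    (hC : ∀ (g : G) (c : K), g • (C c : MvPolynomial (Fin d) K) = C c)
    (hlin : ∀ (g : G) (i : Fin d), (g • (X i : MvPolynomial (Fin d) K)).IsHomogeneous 1)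
    (hfix : ∀ g : G, g ≠ 1 → ∀ v : Fin d → K,
      (∀ i, eval v (g • (X i : MvPolynomial (Fin d) K)) = v i) → v = 0)
    (n : ℕ) (hn : 1 ≤ n)
    (p : Ideal (MvPolynomial (Fin d ⊕ Fin d) K)) [p.IsPrime]
    (hp : p ≠ Ideal.span (Set.range (X : Fin d ⊕ Fin d → MvPolynomial (Fin d ⊕ Fin d) K))) :
    Ideal.map (algebraMap (MvPolynomial (Fin d ⊕ Fin d) K) (Localization.AtPrime p))
        (symbolicPower (derksenIdeal K d G) n) =
      Ideal.map (algebraMap (MvPolynomial (Fin d ⊕ Fin d) K) (Localization.AtPrime p))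
        (derksenIdeal K d G ^ n) := by
  exact symbolicPower_derksenIdeal_localized_general (L := K)
    (fun g i => (hlin g i).coeff_eq_zero (by simp)) hfix (Nat.one_le_iff_ne_zero.1 hn) p hp
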